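/- Let K be an algebraically closed field, R = K[x_1, ..., x_d] a polynomial ring, G a finite group acting linearly on R, S = K[x_1, ..., x_d, y_1, ..., y_d], and I_G the Derksen ideal. Then every embedded associated prime of a power of I_G lies in the singular locus: if p ∈ Ass(S/I_G^n) for some n ≥ 1 and p is not a minimal prime of I_G, then (S/I_G)_p is not a regular local ring. -/

import Mathlib

/-!
A regular local ring is a domain, so if `(S/I_G)_p` were regular, then `0` would be prime in it.
Being the finite intersection of the images of the graph ideals `I_g = (y_i - g(x_i))`, it would be
one of them: `I_G` and `I_g` agree locally at `p` for some `g`, hence so do their `n`-th powers, and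
`p` is associated to `S/I_g ^ n`. The translation `y_i ↦ y_i + g(x_i)` carries `I_g` to the ideal
generated by the variables `y_i` over the domain `K[x]`, whose powers are primary. So `p = I_g`,
and since `I_G` and `I_g` agree locally at `p`, this prime is minimal over `I_G`.
-/

open MvPolynomial

/-- The `n`-th symbolic power of an ideal `I`:
`I^{(n)} = ⋂_{p ∈ Ass(A/I)} (Iⁿ A_p ∩ A)`. -/
noncomputable def symbolicPower {A : Type*} [CommRing A] (I : Ideal A) (n : ℕ) : Ideal A :=
  ⨅ (p : Ideal A) (hp : p ∈ associatedPrimes A (A ⧸ I)),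
    haveI : p.IsPrime := hp.isPrime
    Ideal.comap (algebraMap A (Localization.AtPrime p))
      (Ideal.map (algebraMap A (Localization.AtPrime p)) (I ^ n))

/-- The component `(y₁ - g(x₁), …, y_d - g(x_d))` of the Derksen ideal, in
`S = K[x₁, …, x_d, y₁, …, y_d]`, where the `x`-variables are indexed by `Sum.inl`
and the `y`-variables by `Sum.inr`. -/
noncomputable def derksenComponent (K : Type*) [Field K] (d : ℕ) {G : Type*} [Group G]
    [MulSemiringAction G (MvPolynomial (Fin d) K)] (g : G) :
    Ideal (MvPolynomial (Fin d ⊕ Fin d) K) :=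
  Ideal.span (Set.range fun i : Fin d =>
    X (Sum.inr i) - rename Sum.inl (g • (X i : MvPolynomial (Fin d) K)))

/-- The Derksen ideal `I_G = ⋂_{g ∈ G} (y₁ - g(x₁), …, y_d - g(x_d))`. -/
noncomputable def derksenIdeal (K : Type*) [Field K] (d : ℕ) (G : Type*) [Group G]
    [MulSemiringAction G (MvPolynomial (Fin d) K)] :
    Ideal (MvPolynomial (Fin d ⊕ Fin d) K) :=
  ⨅ g : G, derksenComponent K d g


/-- A local ring is *regular* if it is Noetherian and its maximal ideal can be generated
by `dim A` elements. -/
def IsRegularLocal (A : Type*) [CommRing A] [IsLocalRing A] : Prop :=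
  IsNoetherianRing A ∧ ∃ s : Finset A,
    Ideal.span (s : Set A) = IsLocalRing.maximalIdeal A ∧
      (s.card : WithBot (WithTop ℕ)) = ringKrullDim A

section Regular

open IsLocalRing

theorem exists_span_insert_erase_eq {A M : Type*} [CommRing A] [IsLocalRing A] [AddCommGroup M]
    [Module A M] [DecidableEq M] {N : Submodule A M} {s : Finset M}
    (hs : Submodule.span A (s : Set M) = N) {x : M} (hx : x ∈ N)
    (hx' : x ∉ maximalIdeal A • N) :
    ∃ y ∈ s, Submodule.span A (insert x (s.erase y) : Set M) = N := by
  subst hs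
  obtain ⟨c, -, hc⟩ := Submodule.mem_span_finset.mp hx
  obtain ⟨y, hy, hcy⟩ : ∃ y ∈ s, IsUnit (c y) := by
    by_contra! hcon
    refine hx' (hc ▸ Submodule.sum_mem _ fun y hy => ?_)
    exact Submodule.smul_mem_smul (hcon y hy) (Submodule.subset_span hy)
  have hxs : insert x (s.erase y : Set M) ⊆ Submodule.span A (s : Set M) :=
    Set.insert_subset hx fun z hz => Submodule.subset_span (Finset.mem_of_mem_erase hz)
  have hmem : y ∈ Submodule.span A (insert x (s.erase y) : Set M) := by
    have hcy_smul : c y • y = x - ∑ z ∈ s.erase y, c z • z := by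
      rw [← hc, ← Finset.add_sum_erase s _ hy, add_sub_cancel_right]
    rw [← (Submodule.span A _).smul_mem_iff_of_isUnit hcy, hcy_smul]
    refine sub_mem (Submodule.subset_span (Set.mem_insert _ _)) (Submodule.sum_mem _ fun z hz => ?_)
    exact Submodule.smul_mem _ _ (Submodule.subset_span (Set.mem_insert_of_mem _ hz))
  refine ⟨y, hy, le_antisymm (Submodule.span_le.mpr hxs) (Submodule.span_le.mpr fun z hz => ?_)⟩
  by_cases hzy : z = y
  · exact hzy ▸ hmem
  · exact Submodule.subset_span (Set.mem_insert_of_mem _ (Finset.mem_erase.mpr ⟨hzy, hz⟩))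

theorem spanFinrank_map_quotient_span_singleton_add_one_le {A : Type*} [CommRing A]
    [IsLocalRing A] {I : Ideal A} (hI : I.FG) {x : A} (hx : x ∈ I)
    (hx' : x ∉ maximalIdeal A * I) :
    (I.map (Ideal.Quotient.mk (Ideal.span {x}))).spanFinrank + 1 ≤ I.spanFinrank := by
  classical
  obtain ⟨s, hcard, hs⟩ := Submodule.FG.exists_span_finset_card_eq_spanFinrank hI
  obtain ⟨y, hy, (hspan : Ideal.span _ = I)⟩ := exists_span_insert_erase_eq hs hx hx'
  have hmap : I.map (Ideal.Quotient.mk (Ideal.span {x})) =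
      Ideal.span ((s.erase y).image (Ideal.Quotient.mk (Ideal.span {x})) : Set _) := by
    rw [← hspan, Ideal.map_span, Set.image_insert_eq, Ideal.Quotient.mk_singleton_self,
      Ideal.span_insert_zero, Finset.coe_image]
  calc (I.map (Ideal.Quotient.mk (Ideal.span {x}))).spanFinrank + 1
      ≤ ((s.erase y).image (Ideal.Quotient.mk (Ideal.span {x}))).card + 1 := by
        rw [hmap, ← Set.ncard_coe_finset]
        gcongr
        exact Submodule.spanFinrank_span_le_ncard_of_finite (Finset.finite_toSet _)
    _ ≤ (s.erase y).card + 1 := by gcongr; exact Finset.card_image_le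
    _ = I.spanFinrank := by rw [Finset.card_erase_add_one hy, hcard]

variable {A : Type*} [CommRing A]

theorem exists_mem_maximalIdeal_notMem_sq_notMem_minimalPrimes [IsLocalRing A]
    [IsNoetherianRing A] (hdim : ringKrullDim A ≠ 0) :
    ∃ x ∈ maximalIdeal A, x ∉ maximalIdeal A ^ 2 ∧ ∀ P ∈ minimalPrimes A, x ∉ P := by
  have hsq : ¬maximalIdeal A ≤ maximalIdeal A ^ 2 :=
    (maximalIdeal_sq_lt_of_ringKrullDim_ne_zero hdim).not_ge
  have hmin (P : Ideal A) (hP : P ∈ minimalPrimes A) : ¬maximalIdeal A ≤ P := by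
    intro hle
    have heq : maximalIdeal A = P := le_antisymm hle (le_maximalIdeal hP.1.1.ne_top)
    have hheight : (maximalIdeal A).height = 0 := Ideal.height_eq_zero_iff.mpr (heq ▸ hP)
    exact hdim (by rw [← maximalIdeal_height_eq_ringKrullDim, hheight]; rfl)
  by_contra! hcon
  have hcover : (maximalIdeal A : Set A) ⊆
      ⋃ P ∈ insert (maximalIdeal A ^ 2) (minimalPrimes A), (P : Set A) := by
    intro x hx
    by_cases hx2 : x ∈ maximalIdeal A ^ 2
    · exact Set.mem_biUnion (Set.mem_insert _ _) hx2
    · obtain ⟨P, hP, hxP⟩ := hcon x hx hx2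
      exact Set.mem_biUnion (Set.mem_insert_of_mem _ hP) hxP
  -- Prime avoidance allows one of the ideals, here `m ^ 2`, not to be prime.
  obtain ⟨P, rfl | hP, hle⟩ := (Ideal.subset_union_prime_finite (f := id)
    ((minimalPrimes.finite_of_isNoetherianRing A).insert _) (maximalIdeal A ^ 2)
    (maximalIdeal A ^ 2) fun P hP hne _ =>
      ((Set.mem_insert_iff.mp hP).resolve_left hne).1.1).mp hcover
  exacts [hsq hle, hmin P hP hle]

theorem spanFinrank_maximalIdeal_quotient_span_singleton_add_one_le [IsLocalRing A]
    [IsNoetherianRing A] {x : A} [IsLocalRing (A ⧸ Ideal.span {x})] (hx : x ∈ maximalIdeal A)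
    (hx' : x ∉ maximalIdeal A ^ 2) :
    (maximalIdeal (A ⧸ Ideal.span {x})).spanFinrank + 1 ≤ (maximalIdeal A).spanFinrank := by
  have hπ : Function.Surjective (Ideal.Quotient.mk (Ideal.span {x})) := Ideal.Quotient.mk_surjective
  have : IsLocalHom (Ideal.Quotient.mk (Ideal.span {x})) := .of_surjective _ hπ
  rw [← map_maximalIdeal_of_surjective _ hπ]
  exact spanFinrank_map_quotient_span_singleton_add_one_le (IsNoetherian.noetherian _) hx
    (by rwa [← sq])

theorem isRegularLocalRing_quotient_span_singleton [IsRegularLocalRing A] {x : A}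
    (hx : x ∈ maximalIdeal A) (hx' : x ∉ maximalIdeal A ^ 2) :
    IsRegularLocalRing (A ⧸ Ideal.span {x}) := by
  have : Nontrivial (A ⧸ Ideal.span {x}) := Ideal.Quotient.nontrivial_iff.mpr
    (ne_top_of_le_ne_top Ideal.IsPrime.ne_top' ((Ideal.span_singleton_le_iff_mem _).mpr hx))
  have : IsLocalRing (A ⧸ Ideal.span {x}) := .of_surjective' _ Ideal.Quotient.mk_surjective
  apply IsRegularLocalRing.of_spanFinrank_maximalIdeal_le
  have hdim : ringKrullDim A ≤ ringKrullDim (A ⧸ Ideal.span {x}) + 1 := by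
    have := ringKrullDim_le_ringKrullDim_quotient_add_card ({x} : Finset A)
      (by simpa [ringJacobson_eq_maximalIdeal] using hx)
    rwa [Finset.coe_singleton, Finset.card_singleton, Nat.cast_one] at this
  refine ENat.WithBot.add_le_add_natCast_right_iff (c := 1).mp (le_trans ?_ hdim)
  rw [← IsRegularLocalRing.spanFinrank_maximalIdeal]
  exact_mod_cast spanFinrank_maximalIdeal_quotient_span_singleton_add_one_le hx hx'

theorem isDomain_of_isPrime_span_singleton [IsLocalRing A] [IsNoetherianRing A] {x : A}
    (hx : x ∈ maximalIdeal A) (hprime : (Ideal.span {x}).IsPrime)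
    (hmin : ∀ P ∈ minimalPrimes A, x ∉ P) : IsDomain A := by
  obtain ⟨P, hP, hPx⟩ := Ideal.exists_minimalPrimes_le (bot_le : ⊥ ≤ Ideal.span {x})
  have hPprime : P.IsPrime := hP.1.1
  -- Since `P ⊆ (x)` and `x ∉ P`, every element of `P` is `x` times an element of `P`.
  have hPbot : P = ⊥ := by
    refine Submodule.eq_bot_of_le_smul_of_le_jacobson_bot (maximalIdeal A) P
      (IsNoetherian.noetherian P) (fun z hz => ?_) (maximalIdeal_le_jacobson _)
    obtain ⟨w, rfl⟩ := Ideal.mem_span_singleton.mp (hPx hz)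
    exact Ideal.mul_mem_mul hx ((hPprime.mem_or_mem hz).resolve_left (hmin P hP))
  have : (⊥ : Ideal A).IsPrime := hPbot ▸ hPprime
  exact IsDomain.of_bot_isPrime A

theorem isDomain_of_isRegularLocalRing (A : Type*) [CommRing A] [IsRegularLocalRing A] :
    IsDomain A := by
  induction hr : (maximalIdeal A).spanFinrank using Nat.strong_induction_on generalizing A with
  | _ r ih =>
  by_cases hdim : ringKrullDim A = 0
  · have hrank : (maximalIdeal A).spanFinrank = 0 := by
      exact_mod_cast (IsRegularLocalRing.spanFinrank_maximalIdeal (R := A)).trans hdim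
    have hbot : maximalIdeal A = ⊥ :=
      (Submodule.spanFinrank_eq_zero_iff_eq_bot (IsNoetherian.noetherian _)).mp hrank
    exact (isField_iff_maximalIdeal_eq.mpr hbot).isDomain
  · obtain ⟨x, hx, hx', hmin⟩ := exists_mem_maximalIdeal_notMem_sq_notMem_minimalPrimes hdim
    have hreg := isRegularLocalRing_quotient_span_singleton hx hx'
    have hlt := spanFinrank_maximalIdeal_quotient_span_singleton_add_one_le hx hx'
    have hdom : IsDomain (A ⧸ Ideal.span {x}) := ih _ (by omega) (A ⧸ Ideal.span {x}) rfl
    exact isDomain_of_isPrime_span_singleton hx ((Ideal.Quotient.isDomain_iff_prime _).mp hdom) hmin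

theorem IsRegularLocal.isRegularLocalRing [IsLocalRing A] (h : IsRegularLocal A) :
    IsRegularLocalRing A := by
  obtain ⟨_, s, hs, hcard⟩ := h
  apply IsRegularLocalRing.of_spanFinrank_maximalIdeal_le
  have hrank : (maximalIdeal A).spanFinrank ≤ s.card := by
    rw [← hs, ← Set.ncard_coe_finset]
    exact Submodule.spanFinrank_span_le_ncard_of_finite (Finset.finite_toSet s)
  have hdim : (s.card : WithBot ℕ∞) = ringKrullDim A := hcard
  exact hdim ▸ Nat.cast_le.mpr hrank

theorem IsRegularLocal.isDomain [IsLocalRing A] (h : IsRegularLocal A) : IsDomain A :=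
  have := h.isRegularLocalRing
  isDomain_of_isRegularLocalRing A

end Regular

section PowIdealOfVars

variable {σ R : Type*} [CommSemiring R]

theorem mem_idealOfVars_iff_coeff_zero {f : MvPolynomial σ R} :
    f ∈ idealOfVars σ R ↔ f.coeff 0 = 0 := by
  rw [← pow_one (idealOfVars σ R), mem_pow_idealOfVars_iff']
  simp [Finsupp.degree_eq_zero_iff]

theorem isPrime_idealOfVars [IsDomain R] : (idealOfVars σ R).IsPrime := by
  have hker : idealOfVars σ R = RingHom.ker (constantCoeff : MvPolynomial σ R →+* R) := by
    ext f
    exact mem_idealOfVars_iff_coeff_zero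
  exact hker ▸ RingHom.ker_isPrime _

theorem coeff_mul_of_mem_pow_idealOfVars {a f : MvPolynomial σ R} {k : ℕ}
    (hf : f ∈ idealOfVars σ R ^ k) {x : σ →₀ ℕ} (hx : x.degree = k) :
    (a * f).coeff x = a.coeff 0 * f.coeff x := by
  classical
  rw [coeff_mul, Finset.sum_eq_single (0, x)]
  · rintro ⟨u, v⟩ huv hne
    rw [Finset.HasAntidiagonal.mem_antidiagonal] at huv
    have hdeg : u.degree + v.degree = k := by rw [← map_add, huv, hx]
    have hu : u.degree ≠ 0 := by
      rw [Ne, Finsupp.degree_eq_zero_iff]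
      rintro rfl
      exact hne (by simpa using huv)
    rw [(mem_pow_idealOfVars_iff' k f).mp hf v (by omega), mul_zero]
  · simp

theorem mem_pow_idealOfVars_of_mul_mem [NoZeroDivisors R] {a f : MvPolynomial σ R}
    (ha : a ∉ idealOfVars σ R) {n : ℕ} (haf : a * f ∈ idealOfVars σ R ^ n) :
    f ∈ idealOfVars σ R ^ n := by
  suffices ∀ k ≤ n, f ∈ idealOfVars σ R ^ k from this n le_rfl
  intro k
  induction k with
  | zero => simp
  | succ k ih =>
    intro hk
    have hfk := ih (by omega)
    rw [mem_pow_idealOfVars_iff']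
    intro x hx
    rcases Nat.lt_succ_iff_lt_or_eq.mp hx with hlt | heq
    · exact (mem_pow_idealOfVars_iff' k f).mp hfk x hlt
    · have hcoeff := (mem_pow_idealOfVars_iff' n _).mp haf x (by omega)
      rw [coeff_mul_of_mem_pow_idealOfVars hfk heq] at hcoeff
      exact (mul_eq_zero.mp hcoeff).resolve_left (mt mem_idealOfVars_iff_coeff_zero.mpr ha)

theorem isPrimary_pow_idealOfVars [IsDomain R] {n : ℕ} (hn : n ≠ 0) :
    (idealOfVars σ R ^ n).IsPrimary := by
  have hprime : (idealOfVars σ R).IsPrime := isPrime_idealOfVars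
  refine Ideal.isPrimary_iff.mpr ⟨ne_top_of_le_ne_top hprime.ne_top (Ideal.pow_le_self hn), ?_⟩
  intro f a hfa
  rw [Ideal.radical_pow _ hn, hprime.radical]
  by_contra! hcon
  exact hcon.1 (mem_pow_idealOfVars_of_mul_mem hcon.2 (mul_comm f a ▸ hfa))

end PowIdealOfVars

section GraphIdeal

variable {σ τ R : Type*} [CommRing R]

/-- The translation `X i ↦ X i - u i` of the affine space `R ^ τ`. -/
noncomputable def translateEquiv (u : τ → R) : MvPolynomial τ R ≃ₐ[R] MvPolynomial τ R :=
  AlgEquiv.ofAlgHom (aeval fun i => X i - C (u i)) (aeval fun i => X i + C (u i))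
    (by ext i : 1; simp [algHom_C]) (by ext i : 1; simp [algHom_C])

/-- The ideal of the graph of the polynomial map with components `u`, where `Sum.inl` indexes the
coordinates of the source and `Sum.inr` those of the target. -/
noncomputable def graphIdeal (u : τ → MvPolynomial σ R) : Ideal (MvPolynomial (σ ⊕ τ) R) :=
  Ideal.span (Set.range fun i => X (Sum.inr i) - rename Sum.inl (u i))

/-- The isomorphism `R[x, y] ≃ R[x][y]` that fixes the `x`-variables and straightens the graph of
`u`, sending `y i - u i` to `y i`. -/
noncomputable def graphEquiv (u : τ → MvPolynomial σ R) :
    MvPolynomial (σ ⊕ τ) R ≃+* MvPolynomial τ (MvPolynomial σ R) :=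
  (((renameEquiv R (Equiv.sumComm σ τ)).trans (sumAlgEquiv R τ σ)).toRingEquiv).trans
    (translateEquiv u).symm.toRingEquiv

theorem graphEquiv_sub (u : τ → MvPolynomial σ R) (i : τ) :
    graphEquiv u (X (Sum.inr i) - rename Sum.inl (u i)) = X i := by
  have hC : sumAlgEquiv R τ σ (rename (Sum.swap ∘ Sum.inl) (u i)) = C (u i) :=
    DFunLike.congr_fun (sumAlgEquiv_comp_rename_inr R τ σ) (u i)
  simp [graphEquiv, translateEquiv, rename_rename, hC]

theorem map_graphEquiv_graphIdeal (u : τ → MvPolynomial σ R) :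
    (graphIdeal u).map (graphEquiv u) = idealOfVars τ (MvPolynomial σ R) := by
  rw [graphIdeal, idealOfVars, Ideal.map_span, ← Set.range_comp]
  congr 2
  ext1 i
  exact graphEquiv_sub u i

theorem graphIdeal_pow_eq_comap (u : τ → MvPolynomial σ R) (n : ℕ) :
    graphIdeal u ^ n = (idealOfVars τ (MvPolynomial σ R) ^ n).comap (graphEquiv u) := by
  rw [← map_graphEquiv_graphIdeal, ← Ideal.map_pow]
  exact (Ideal.comap_map_of_bijective _ (graphEquiv u).bijective).symm

theorem graphIdeal_fg [Finite τ] (u : τ → MvPolynomial σ R) : (graphIdeal u).FG :=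
  ⟨(Set.finite_range _).toFinset, by rw [Set.Finite.coe_toFinset, graphIdeal]⟩

theorem isPrime_graphIdeal [IsDomain R] (u : τ → MvPolynomial σ R) : (graphIdeal u).IsPrime := by
  have := isPrime_idealOfVars (σ := τ) (R := MvPolynomial σ R)
  rw [← pow_one (graphIdeal u), graphIdeal_pow_eq_comap, pow_one]
  exact Ideal.IsPrime.comap _

theorem associatedPrimes_quotient_graphIdeal_pow_subset [IsDomain R] (u : τ → MvPolynomial σ R)
    (n : ℕ) : associatedPrimes _ (MvPolynomial (σ ⊕ τ) R ⧸ graphIdeal u ^ n) ⊆ {graphIdeal u} := by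
  intro p hp
  rcases eq_or_ne n 0 with rfl | hn
  · rw [pow_zero, Ideal.one_eq_top] at hp
    exact absurd hp not_isAssociatedPrime_of_subsingleton
  · have hprimary : (graphIdeal u ^ n).IsPrimary := by
      rw [graphIdeal_pow_eq_comap]
      exact (isPrimary_pow_idealOfVars hn).comap (graphEquiv u).toRingHom
    rw [Set.mem_singleton_iff, IsAssociatedPrime.eq_radical hprimary hp, Ideal.radical_pow _ hn,
      (isPrime_graphIdeal u).radical]

end GraphIdeal

section Colon

variable {A : Type*} [CommRing A] {I J p : Ideal A}

-- For finitely generated `J ⊇ I`, the condition `¬I.colon J ≤ p` says that `I` and `J` become equal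
-- in the localization at `p`.
theorem exists_colon_singleton_le_of_fg (hp : p.IsPrime) (hJ : J.FG)
    (h : I.colon (J : Set A) ≤ p) : ∃ f ∈ J, I.colon {f} ≤ p := by
  obtain ⟨s, rfl⟩ := hJ
  have hinf : s.inf (fun f => I.colon {f}) ≤ p := by
    rw [Ideal.colon_span, ← Set.biUnion_of_singleton (s : Set A)] at h
    simpa only [Submodule.colon_iUnion, Finset.inf_eq_iInf, Finset.mem_coe] using h
  obtain ⟨f, hf, hfp⟩ := hp.inf_le'.mp hinf
  exact ⟨f, Ideal.subset_span hf, hfp⟩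

theorem pow_mem_colon_pow {t : A} (ht : t ∈ I.colon (J : Set A)) (n : ℕ) :
    t ^ n ∈ (I ^ n).colon ((J ^ n : Ideal A) : Set A) := by
  have hmul : Ideal.span {t} * J ≤ I :=
    Ideal.span_singleton_mul_le_iff.mpr (Submodule.mem_colon.mp ht)
  rw [Submodule.mem_colon]
  refine Ideal.span_singleton_mul_le_iff.mp ?_
  rw [← Ideal.span_singleton_pow, ← mul_pow]
  exact Ideal.pow_right_mono hmul n

theorem not_colon_pow_le (hp : p.IsPrime) (h : ¬I.colon (J : Set A) ≤ p) (n : ℕ) :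
    ¬(I ^ n).colon ((J ^ n : Ideal A) : Set A) ≤ p := by
  obtain ⟨t, ht, htp⟩ := SetLike.not_le_iff_exists.mp h
  exact fun hle => htp (hp.mem_of_pow_mem n (hle (pow_mem_colon_pow ht n)))

theorem bot_colon_singleton_mk (f : A) :
    (⊥ : Submodule A (A ⧸ I)).colon {Ideal.Quotient.mk I f} = I.colon {f} := by
  ext r
  rw [Submodule.mem_colon_singleton, Submodule.mem_colon_singleton, Submodule.mem_bot,
    ← Ideal.Quotient.eq_zero_iff_mem, smul_eq_mul, map_mul]
  rfl

theorem mem_associatedPrimes_quotient_of_not_colon_le (hIJ : I ≤ J)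
    (hIJp : ¬I.colon (J : Set A) ≤ p) (hass : p ∈ associatedPrimes A (A ⧸ I)) :
    p ∈ associatedPrimes A (A ⧸ J) := by
  obtain ⟨hp, x, hx⟩ := hass
  obtain ⟨f, rfl⟩ := Ideal.Quotient.mk_surjective x
  obtain ⟨t, ht, htp⟩ := SetLike.not_le_iff_exists.mp hIJp
  refine ⟨hp, Ideal.Quotient.mk J f, le_antisymm ?_ ?_⟩
  · rw [hx, bot_colon_singleton_mk, bot_colon_singleton_mk]
    exact Ideal.radical_mono (Submodule.colon_mono hIJ subset_rfl)
  · rw [bot_colon_singleton_mk, hp.radical_le_iff]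
    intro r hr
    have htr : t * r ∈ I.colon {f} := by
      rw [Submodule.mem_colon_singleton, smul_eq_mul, mul_assoc]
      exact Submodule.mem_colon.mp ht _ (Submodule.mem_colon_singleton.mp hr)
    rw [bot_colon_singleton_mk] at hx
    exact (hp.mem_or_mem (hx ▸ Ideal.le_radical htr : t * r ∈ p)).resolve_left htp

theorem mem_minimalPrimes_of_not_colon_le (hJ : J.IsPrime) (hIJ : I ≤ J)
    (h : ¬I.colon (J : Set A) ≤ J) : J ∈ I.minimalPrimes := by
  obtain ⟨t, ht, htJ⟩ := SetLike.not_le_iff_exists.mp h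
  refine ⟨⟨hJ, hIJ⟩, fun P ⟨hP, hIP⟩ hPJ f hf => ?_⟩
  exact (hP.mem_or_mem (hIP (Submodule.mem_colon.mp ht f hf))).resolve_left fun htP => htJ (hPJ htP)

end Colon

section Intersection

variable {A ι : Type*} [CommRing A] [Finite ι] {J : ι → Ideal A} {I : Ideal A}

theorem exists_not_colon_le_of_isDomain_localization (hJ : ∀ i, (J i).FG) (hI : I = ⨅ i, J i)
    (q : Ideal (A ⧸ I)) [q.IsPrime] [IsDomain (Localization.AtPrime q)] :
    ∃ i, ¬I.colon (J i : Set A) ≤ q.comap (Ideal.Quotient.mk I) := by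
  let φ : A →+* Localization.AtPrime q := (algebraMap (A ⧸ I) _).comp (Ideal.Quotient.mk I)
  have hker : (RingHom.ker φ).IsPrime := RingHom.ker_isPrime φ
  have hle : ⨅ i, J i ≤ RingHom.ker φ := fun f hf => by
    rw [← hI] at hf
    rw [RingHom.mem_ker, RingHom.comp_apply, Ideal.Quotient.eq_zero_iff_mem.mpr hf, map_zero]
  obtain ⟨i, hi⟩ : ∃ i, J i ≤ RingHom.ker φ := by
    cases nonempty_fintype ι
    simpa using hker.inf_le'.mp ((Finset.inf_univ_eq_iInf J).trans_le hle)
  refine ⟨i, fun hcolon => ?_⟩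
  obtain ⟨f, hf, hfq⟩ := exists_colon_singleton_le_of_fg (Ideal.IsPrime.comap _) (hJ i) hcolon
  obtain ⟨⟨s, hs⟩, hsf⟩ := (IsLocalization.map_eq_zero_iff q.primeCompl _ _).mp (hi hf)
  obtain ⟨t, rfl⟩ := Ideal.Quotient.mk_surjective s
  rw [← map_mul, Ideal.Quotient.eq_zero_iff_mem] at hsf
  exact hs (hfq (Submodule.mem_colon_singleton.mpr hsf))

theorem not_isDomain_localization_of_mem_associatedPrimes_pow (hJ : ∀ i, (J i).FG)
    (hI : I = ⨅ i, J i) {n : ℕ} (hJn : ∀ i, associatedPrimes A (A ⧸ J i ^ n) ⊆ {J i})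
    (q : Ideal (A ⧸ I)) [q.IsPrime]
    (hass : q.comap (Ideal.Quotient.mk I) ∈ associatedPrimes A (A ⧸ I ^ n))
    (hmin : q.comap (Ideal.Quotient.mk I) ∉ I.minimalPrimes) :
    ¬IsDomain (Localization.AtPrime q) := by
  intro hdom
  obtain ⟨i, hi⟩ := exists_not_colon_le_of_isDomain_localization hJ hI q
  have hle : I ≤ J i := hI.trans_le (iInf_le J i)
  have hqi : q.comap (Ideal.Quotient.mk I) = J i := hJn i <|
    mem_associatedPrimes_quotient_of_not_colon_le (Ideal.pow_right_mono hle n)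
      (not_colon_pow_le hass.isPrime hi n) hass
  rw [hqi] at hi hass hmin
  exact hmin (mem_minimalPrimes_of_not_colon_le hass.isPrime hle hi)

end Intersection

theorem derksenIdeal_eq_iInf_graphIdeal (K : Type*) [Field K] (d : ℕ) (G : Type*) [Group G]
    [MulSemiringAction G (MvPolynomial (Fin d) K)] :
    derksenIdeal K d G =
      ⨅ g : G, graphIdeal fun i => g • (X i : MvPolynomial (Fin d) K) :=
  rfl

theorem embedded_prime_of_power_mem_singular_locus_general {R σ τ ι : Type*} [CommRing R]
    [IsDomain R] [Finite τ] [Finite ι] {u : ι → τ → MvPolynomial σ R}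
    {I : Ideal (MvPolynomial (σ ⊕ τ) R)} (hI : I = ⨅ i, graphIdeal (u i)) (n : ℕ)
    (q : Ideal (MvPolynomial (σ ⊕ τ) R ⧸ I)) [q.IsPrime]
    (hass : q.comap (Ideal.Quotient.mk I) ∈
      associatedPrimes (MvPolynomial (σ ⊕ τ) R) (MvPolynomial (σ ⊕ τ) R ⧸ I ^ n))
    (hmin : q.comap (Ideal.Quotient.mk I) ∉ I.minimalPrimes) :
    ¬IsDomain (Localization.AtPrime q) :=
  not_isDomain_localization_of_mem_associatedPrimes_pow (fun i => graphIdeal_fg (u i)) hI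
    (fun i => associatedPrimes_quotient_graphIdeal_pow_subset (u i) n) q hass hmin

/-- Every embedded associated prime of a power of the Derksen ideal lies in the singular
locus: if `p = q ∩ S` is an associated prime of `S/I_Gⁿ` that is not a minimal prime of
`I_G`, then the local ring `(S/I_G)_p` is not regular. -/
theorem embedded_prime_of_power_mem_singular_locus {K : Type*} [Field K] [IsAlgClosed K]
    (d : ℕ) (G : Type*) [Group G] [Finite G]
    [MulSemiringAction G (MvPolynomial (Fin d) K)]
    (hC : ∀ (g : G) (c : K), g • (C c : MvPolynomial (Fin d) K) = C c)
    (hlin : ∀ (g : G) (i : Fin d), (g • (X i : MvPolynomial (Fin d) K)).IsHomogeneous 1)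
    (n : ℕ) (hn : 1 ≤ n)
    (q : Ideal (MvPolynomial (Fin d ⊕ Fin d) K ⧸ derksenIdeal K d G)) [q.IsPrime]
    (hass : q.comap (Ideal.Quotient.mk (derksenIdeal K d G)) ∈
      associatedPrimes (MvPolynomial (Fin d ⊕ Fin d) K)
        (MvPolynomial (Fin d ⊕ Fin d) K ⧸ (derksenIdeal K d G ^ n)))
    (hmin : q.comap (Ideal.Quotient.mk (derksenIdeal K d G)) ∉
      (derksenIdeal K d G).minimalPrimes) :
    ¬ IsRegularLocal (Localization.AtPrime q) := fun hreg =>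
  embedded_prime_of_power_mem_singular_locus_general (derksenIdeal_eq_iInf_graphIdeal K d G) n q
    hass hmin hreg.isDomain
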